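/- Let p ≥ 2 and 2 ≤ k ≤ p−1 be integers, M > 0, h ≥ 1, R > 1; let ω ∈ C^∞(ℝ) satisfy |ω(ξ)| ≤ 1 for all ξ, ω(ξ) = 0 for |ξ| ≤ 1, and ω constant on each of {ξ ≥ R} and {ξ ≤ −R}; let ψ ∈ C₀^∞(ℝ) with 0 ≤ ψ ≤ 1, ψ(y) = 1 for |y| ≤ 1/2 and ψ(y) = 0 for |y| ≥ 1. Define λ_{p−k}(x,ξ) := M·ω(ξ/h)·⟨ξ⟩_h^{−k+1}·∫₀ˣ ⟨y⟩^{−(p−k)/(p−1)} ψ(⟨y⟩/⟨ξ⟩_h^{p−1}) dy. Then there exists C_k > 0 (depending on k, p, R, ω, ψ but not on h, M, x, ξ) such that |∂_ξ λ_{p−k}(x,ξ) · ∂_x λ_{p−k}(x,ξ)| ≤ C_k·M²·⟨x⟩^{−(p−k)/(p−1)}·⟨ξ⟩_h^{−k} ≤ C_k·M²·h^{−1} for all x, ξ ∈ ℝ. -/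

import Mathlib

open MeasureTheory Real

noncomputable section

/-- The Japanese bracket `⟨x⟩ = (1 + x²)^(1/2)`. -/
def jb (x : ℝ) : ℝ := Real.sqrt (1 + x ^ 2)

/-- `⟨ξ⟩ₕ = (h² + ξ²)^(1/2)`. -/
def jbh (h ξ : ℝ) : ℝ := Real.sqrt (h ^ 2 + ξ ^ 2)

/-!
Write `T = ⟨ξ⟩ₕ^{p-1}` and `a = (p-k)/(p-1)`, so that `T^{a-1} = ⟨ξ⟩ₕ^{-k+1}` and
`λ_{p-k} = M·ω(ξ/h)·N(T)`, where `N(T) = T^{a-1}·∫₀ˣ ⟨y⟩^{-a} ψ(⟨y⟩/T) dy`. On the support of the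
integrand `|y| ≲ T`, and `⟨y⟩^{-a} ≤ |y|^{-a}` with `a < 1`; hence `N` is bounded uniformly in `x`.
Differentiating `ψ(⟨y⟩/T)` in `T` replaces `ψ(s)` by `-s·ψ'(s)/T`, an integrand of the same kind,
so `T·N'(T)` is bounded as well. Both `ω(ξ/h)` and `N(⟨ξ⟩ₕ^{p-1})` therefore lose a factor `⟨ξ⟩ₕ`
under `∂_ξ`, which gives `|∂_ξ λ| ≲ M·⟨ξ⟩ₕ⁻¹`, while
`|∂_x λ| ≲ M·⟨ξ⟩ₕ^{-k+1}·⟨x⟩^{-a}` is the fundamental theorem of calculus.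
-/

section Brackets

variable {h : ℝ}

lemma jb_pos (x : ℝ) : 0 < jb x := Real.sqrt_pos.2 (by positivity)

lemma one_le_jb (x : ℝ) : 1 ≤ jb x := Real.one_le_sqrt.2 (by nlinarith [sq_nonneg x])

lemma abs_le_jb (x : ℝ) : |x| ≤ jb x := Real.abs_le_sqrt (by linarith)

lemma jb_neg (x : ℝ) : jb (-x) = jb x := by rw [jb, neg_sq, jb]

lemma continuous_jb : Continuous jb := by
  unfold jb
  fun_prop

lemma continuous_jb_rpow (a : ℝ) : Continuous fun y => jb y ^ a :=
  continuous_jb.rpow_const fun y => Or.inl (jb_pos y).ne'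

lemma le_jbh (h ξ : ℝ) : h ≤ jbh h ξ := Real.le_sqrt_of_sq_le (by nlinarith [sq_nonneg ξ])

lemma jbh_pos (hh : 0 < h) (ξ : ℝ) : 0 < jbh h ξ := hh.trans_le (le_jbh h ξ)

lemma abs_le_jbh (h ξ : ℝ) : |ξ| ≤ jbh h ξ := Real.abs_le_sqrt (by nlinarith [sq_nonneg h])

lemma jbh_eq_mul_jb (hh : 0 < h) (ξ : ℝ) : jbh h ξ = h * jb (ξ / h) := by
  unfold jbh jb
  rw [← Real.sqrt_sq hh.le, ← Real.sqrt_mul (by positivity), Real.sqrt_sq hh.le]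
  congr 1
  field_simp

lemma hasDerivAt_jbh (hh : 0 < h) (ξ : ℝ) : HasDerivAt (jbh h) (ξ / jbh h ξ) ξ := by
  have hsq : HasDerivAt (fun ζ : ℝ => h ^ 2 + ζ ^ 2) (2 * ξ) ξ := by
    simpa using (hasDerivAt_pow 2 ξ).const_add (h ^ 2)
  refine (hsq.sqrt (by positivity)).congr_deriv ?_
  rw [mul_div_mul_left _ _ two_ne_zero, jbh]

lemma hasDerivAt_jbh_rpow (hh : 0 < h) (q ξ : ℝ) :
    HasDerivAt (fun ζ => jbh h ζ ^ q) (jbh h ξ ^ q * (q * (ξ / jbh h ξ ^ 2))) ξ := by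
  have hW := jbh_pos hh ξ
  refine ((hasDerivAt_jbh hh ξ).rpow_const (Or.inl hW.ne')).congr_deriv ?_
  rw [Real.rpow_sub_one hW.ne']
  field_simp

lemma abs_div_jbh_sq_le (hh : 0 < h) (ξ : ℝ) : |ξ / jbh h ξ ^ 2| ≤ (jbh h ξ)⁻¹ := by
  have hW := jbh_pos hh ξ
  calc |ξ / jbh h ξ ^ 2| = |ξ| / jbh h ξ ^ 2 := by rw [abs_div, abs_of_pos (pow_pos hW 2)]
    _ ≤ jbh h ξ / jbh h ξ ^ 2 := by gcongr; exact abs_le_jbh h ξ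
    _ = (jbh h ξ)⁻¹ := by field_simp

lemma jb_rpow_mul_jbh_rpow_le_inv {a k : ℝ} (ha : 0 ≤ a) (hk : 1 ≤ k) (hh : 1 ≤ h) (x ξ : ℝ) :
    jb x ^ (-a) * jbh h ξ ^ (-k) ≤ h⁻¹ := by
  have hh0 : 0 < h := by linarith
  calc jb x ^ (-a) * jbh h ξ ^ (-k) ≤ 1 * jbh h ξ ^ (-1 : ℝ) := by
        gcongr
        · exact Real.rpow_nonneg (jbh_pos hh0 ξ).le _
        · exact Real.rpow_le_one_of_one_le_of_nonpos (one_le_jb x) (by linarith)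
        · exact hh.trans (le_jbh h ξ)
    _ = (jbh h ξ)⁻¹ := by rw [one_mul, Real.rpow_neg_one]
    _ ≤ h⁻¹ := inv_anti₀ hh0 (le_jbh h ξ)

end Brackets

section FrequencyDerivatives

variable {h : ℝ}

lemma abs_deriv_comp_jbh_rpow_le {f : ℝ → ℝ} {C : ℝ} (hf : ∀ T, 0 < T → DifferentiableAt ℝ f T)
    (hfC : ∀ T, 0 < T → |T * deriv f T| ≤ C) (hh : 0 < h) (q ξ : ℝ) :
    |deriv (fun ζ => f (jbh h ζ ^ q)) ξ| ≤ |q| * C * (jbh h ξ)⁻¹ := by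
  have hT : 0 < jbh h ξ ^ q := Real.rpow_pos_of_pos (jbh_pos hh ξ) q
  have hC : 0 ≤ C := (abs_nonneg _).trans (hfC _ hT)
  have hderiv := (hf _ hT).hasDerivAt.comp ξ (hasDerivAt_jbh_rpow hh q ξ)
  calc |deriv (fun ζ => f (jbh h ζ ^ q)) ξ|
      = |q| * |jbh h ξ ^ q * deriv f (jbh h ξ ^ q)| * |ξ / jbh h ξ ^ 2| := by
        rw [← abs_mul, ← abs_mul]
        exact congrArg _ (hderiv.deriv.trans (by ring))
    _ ≤ |q| * C * (jbh h ξ)⁻¹ := by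
        gcongr
        · exact hfC _ hT
        · exact abs_div_jbh_sq_le hh ξ

lemma abs_deriv_comp_div_le {ω : ℝ → ℝ} {A : ℝ} (hωA : ∀ t, |deriv ω t| * jb t ≤ A)
    (hh : 0 < h) (ξ : ℝ) : |deriv (fun ζ => ω (ζ / h)) ξ| ≤ A * (jbh h ξ)⁻¹ := by
  have hj := jb_pos (ξ / h)
  have hderiv : deriv (fun ζ => ω (ζ / h)) ξ = h⁻¹ * deriv ω (ξ / h) := by
    simpa only [div_eq_inv_mul, smul_eq_mul] using deriv_comp_mul_left h⁻¹ ω ξ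
  rw [hderiv, abs_mul, abs_of_pos (inv_pos.2 hh), jbh_eq_mul_jb hh]
  calc h⁻¹ * |deriv ω (ξ / h)|
      = |deriv ω (ξ / h)| * jb (ξ / h) * (h * jb (ξ / h))⁻¹ := by field_simp
    _ ≤ A * (h * jb (ξ / h))⁻¹ := by gcongr; exact hωA _

lemma exists_abs_deriv_mul_jb_le {ω : ℝ → ℝ} {R : ℝ} (hω : ContDiff ℝ 1 ω)
    (hωp : ∀ ξ₁ ξ₂ : ℝ, R ≤ ξ₁ → R ≤ ξ₂ → ω ξ₁ = ω ξ₂)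
    (hωm : ∀ ξ₁ ξ₂ : ℝ, ξ₁ ≤ -R → ξ₂ ≤ -R → ω ξ₁ = ω ξ₂) :
    ∃ A, ∀ t, |deriv ω t| * jb t ≤ A := by
  have hsupp : HasCompactSupport (deriv ω) := by
    refine HasCompactSupport.intro (isCompact_Icc (a := -R) (b := R)) fun t ht => ?_
    rw [← deriv_const t (ω t)]
    apply Filter.EventuallyEq.deriv_eq
    rcases not_and_or.1 ht with ht | ht <;> rw [not_le] at ht
    · filter_upwards [Iio_mem_nhds ht] with s hs using hωm s t (le_of_lt hs) ht.le
    · filter_upwards [Ioi_mem_nhds ht] with s hs using hωp s t (le_of_lt hs) ht.le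
  obtain ⟨A, hA⟩ := (hsupp.mul_right (f' := jb)).exists_bound_of_continuous
    ((hω.continuous_deriv le_rfl).mul continuous_jb)
  exact ⟨A, fun t => by simpa [abs_of_pos (jb_pos t)] using hA t⟩

end FrequencyDerivatives

lemma abs_integral_le_of_abs_le_rpow {g : ℝ → ℝ} {a B T x : ℝ} (ha : a < 1) (hB : 0 ≤ B)
    (hT : 0 ≤ T) (hx : 0 ≤ x) (hgB : ∀ y, 0 < y → |g y| ≤ B * y ^ (-a))
    (hgT : ∀ y, T < y → g y = 0) :
    |∫ y in (0 : ℝ)..x, g y| ≤ B * (T ^ (1 - a) / (1 - a)) := by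
  have hmin : 0 ≤ min x T := le_min hx hT
  have htrunc : ∫ y in (0 : ℝ)..x, g y = ∫ y in (0 : ℝ)..min x T, g y := by
    rw [intervalIntegral.integral_of_le hx, intervalIntegral.integral_of_le hmin]
    refine setIntegral_eq_of_subset_of_forall_sdiff_eq_zero measurableSet_Ioc
      (Set.Ioc_subset_Ioc_right (min_le_left x T)) fun y hy => hgT y ?_
    by_contra! hyT
    exact hy.2 ⟨hy.1.1, le_min hy.1.2 hyT⟩
  calc |∫ y in (0 : ℝ)..x, g y| ≤ ∫ y in (0 : ℝ)..min x T, B * y ^ (-a) := by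
        rw [htrunc, ← Real.norm_eq_abs]
        exact intervalIntegral.norm_integral_le_of_norm_le hmin
          (Filter.Eventually.of_forall fun y hy => hgB y hy.1)
          ((intervalIntegral.intervalIntegrable_rpow' (by linarith)).const_mul B)
    _ = B * (min x T ^ (1 - a) / (1 - a)) := by
        rw [intervalIntegral.integral_const_mul, integral_rpow (Or.inl (by linarith)),
          neg_add_eq_sub, Real.zero_rpow (by linarith), sub_zero]
    _ ≤ B * (T ^ (1 - a) / (1 - a)) := by
        have : 0 < 1 - a := by linarith
        gcongr
        exact min_le_right x T

/-- The integral `∫₀ˣ ⟨y⟩^{-a} φ(⟨y⟩/T) dy` of the weight `⟨y⟩^{-a}`, cut off by the profile `φ`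
at the scale `T`. -/
def bracketIntegral (a : ℝ) (φ : ℝ → ℝ) (T x : ℝ) : ℝ :=
  ∫ y in (0:ℝ)..x, jb y ^ (-a) * φ (jb y / T)

/-- `bracketIntegral` multiplied by `T^{a-1}`, the power that makes it bounded in `T` and `x` when
`0 ≤ a < 1` and `φ` has compact support. -/
def normalizedIntegral (a : ℝ) (φ : ℝ → ℝ) (T x : ℝ) : ℝ := T ^ (a - 1) * bracketIntegral a φ T x

section BracketIntegral

variable {a T : ℝ} {φ : ℝ → ℝ}

lemma continuous_jb_rpow_mul_comp (hφ : Continuous φ) (a T : ℝ) :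
    Continuous fun y => jb y ^ (-a) * φ (jb y / T) :=
  (continuous_jb_rpow _).mul (hφ.comp (continuous_jb.div_const T))

lemma bracketIntegral_neg (a : ℝ) (φ : ℝ → ℝ) (T x : ℝ) :
    bracketIntegral a φ T (-x) = -bracketIntegral a φ T x := by
  have heven := intervalIntegral.integral_comp_neg (a := 0) (b := x)
    fun y => jb y ^ (-a) * φ (jb y / T)
  simp only [jb_neg, neg_zero] at heven
  rw [bracketIntegral, intervalIntegral.integral_symm, ← heven, bracketIntegral]

lemma abs_bracketIntegral_abs (a : ℝ) (φ : ℝ → ℝ) (T x : ℝ) :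
    |bracketIntegral a φ T (|x|)| = |bracketIntegral a φ T x| := by
  rcases abs_choice x with hx | hx <;> rw [hx]
  rw [bracketIntegral_neg, abs_neg]

lemma abs_bracketIntegral_le {K r : ℝ} (ha0 : 0 ≤ a) (ha1 : a < 1) (hr : 0 ≤ r) (hT : 0 < T)
    (hφK : ∀ s, |φ s| ≤ K) (hφr : ∀ s, r < s → φ s = 0) (x : ℝ) :
    |bracketIntegral a φ T x| ≤ K * ((r * T) ^ (1 - a) / (1 - a)) := by
  have hK : 0 ≤ K := (abs_nonneg _).trans (hφK 0)
  rw [← abs_bracketIntegral_abs]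
  refine abs_integral_le_of_abs_le_rpow ha1 hK (by positivity) (abs_nonneg x)
    (fun y hy => ?_) fun y hy => ?_
  · have hy_le : y ≤ jb y := (le_abs_self y).trans (abs_le_jb y)
    have hj : jb y ^ (-a) ≤ y ^ (-a) := Real.rpow_le_rpow_of_nonpos hy hy_le (by linarith)
    have hj_pos : 0 < jb y ^ (-a) := Real.rpow_pos_of_pos (jb_pos y) _
    rw [abs_mul, abs_of_pos hj_pos, mul_comm]
    gcongr
    exact hφK _
  · rw [hφr _ ((lt_div_iff₀ hT).2 (hy.trans_le ((le_abs_self y).trans (abs_le_jb y)))), mul_zero]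

lemma exists_abs_normalizedIntegral_le (ha0 : 0 ≤ a) (ha1 : a < 1) (hφ : Continuous φ)
    (hφc : HasCompactSupport φ) : ∃ C, ∀ T x, 0 < T → |normalizedIntegral a φ T x| ≤ C := by
  obtain ⟨K, hK⟩ := hφc.exists_bound_of_continuous hφ
  obtain ⟨r, hr, hφr⟩ := hφc.exists_pos_le_norm
  refine ⟨K * (r ^ (1 - a) / (1 - a)), fun T x hT => ?_⟩
  have hTa : 0 < T ^ (a - 1) := Real.rpow_pos_of_pos hT _
  have hcancel : T ^ (a - 1) * T ^ (1 - a) = 1 := by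
    rw [← Real.rpow_add hT, sub_add_sub_cancel, sub_self, Real.rpow_zero]
  calc |normalizedIntegral a φ T x| = T ^ (a - 1) * |bracketIntegral a φ T x| := by
        rw [normalizedIntegral, abs_mul, abs_of_pos hTa]
    _ ≤ T ^ (a - 1) * (K * ((r * T) ^ (1 - a) / (1 - a))) := by
        gcongr
        exact abs_bracketIntegral_le ha0 ha1 hr.le hT hK
          (fun s hs => hφr s (hs.le.trans (le_abs_self s))) x
    _ = T ^ (a - 1) * T ^ (1 - a) * (K * (r ^ (1 - a) / (1 - a))) := by
        rw [Real.mul_rpow hr.le hT.le]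
        ring
    _ = K * (r ^ (1 - a) / (1 - a)) := by rw [hcancel, one_mul]

lemma hasDerivAt_bracketIntegral_endpoint (hφ : Continuous φ) (a T x : ℝ) :
    HasDerivAt (bracketIntegral a φ T) (jb x ^ (-a) * φ (jb x / T)) x :=
  ((continuous_jb_rpow_mul_comp hφ a T).integral_hasStrictDerivAt 0 x).hasDerivAt

lemma hasDerivAt_comp_const_div {c S : ℝ} (hφ : DifferentiableAt ℝ φ (c / S)) (hS : S ≠ 0) :
    HasDerivAt (fun S => φ (c / S)) (-S⁻¹ * (c / S * deriv φ (c / S))) S := by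
  have hdiv : HasDerivAt (fun S => c / S) (c * -(S ^ 2)⁻¹) S := (hasDerivAt_inv hS).const_mul c
  refine (hφ.hasDerivAt.comp S hdiv).congr_deriv ?_
  field_simp

lemma hasDerivAt_bracketIntegral_scale (hφ : ContDiff ℝ 1 φ) (a x : ℝ) (hT : 0 < T) :
    HasDerivAt (fun S => bracketIntegral a φ S x)
      (-T⁻¹ * bracketIntegral a (fun s => s * deriv φ s) T x) T := by
  have hφ' : Continuous (deriv φ) := hφ.continuous_deriv le_rfl
  let F' : ℝ → ℝ → ℝ := fun S y => -S⁻¹ * (jb y ^ (-a) * (jb y / S * deriv φ (jb y / S)))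
  have hF' : ContinuousOn F'.uncurry (Set.Icc (T / 2) (2 * T) ×ˢ Set.uIcc 0 x) := by
    have hfst : ∀ z ∈ Set.Icc (T / 2) (2 * T) ×ˢ Set.uIcc 0 x, z.1 ≠ 0 := fun z hz =>
      ((half_pos hT).trans_le hz.1.1).ne'
    have hdiv : ContinuousOn (fun z : ℝ × ℝ => jb z.2 / z.1)
        (Set.Icc (T / 2) (2 * T) ×ˢ Set.uIcc 0 x) :=
      (continuous_jb.comp continuous_snd).continuousOn.div continuousOn_fst hfst
    exact (continuousOn_fst.inv₀ hfst).neg.mul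
      (((continuous_jb_rpow (-a)).comp continuous_snd).continuousOn.mul
        (hdiv.mul (hφ'.comp_continuousOn hdiv)))
  obtain ⟨B, hB⟩ := (isCompact_Icc.prod isCompact_uIcc).exists_bound_of_continuousOn hF'
  have hderiv : ∀ S ∈ Set.Icc (T / 2) (2 * T), ∀ y,
      HasDerivAt (fun S => jb y ^ (-a) * φ (jb y / S)) (F' S y) S := fun S hS y =>
    ((hasDerivAt_comp_const_div (hφ.differentiable one_ne_zero _)
      ((half_pos hT).trans_le hS.1).ne').const_mul (jb y ^ (-a))).congr_deriv
        (mul_left_comm _ _ _)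
  simp only [bracketIntegral]
  rw [← intervalIntegral.integral_const_mul]
  exact (intervalIntegral.hasDerivAt_integral_of_dominated_loc_of_deriv_le
    (F' := F') (bound := fun _ => B) (Icc_mem_nhds (by linarith) (by linarith))
    (Filter.Eventually.of_forall fun S =>
      (continuous_jb_rpow_mul_comp hφ.continuous a S).aestronglyMeasurable)
    ((continuous_jb_rpow_mul_comp hφ.continuous a T).intervalIntegrable 0 x)
    ((continuous_jb_rpow_mul_comp (continuous_id.mul hφ') a T).const_mul _).aestronglyMeasurable
    (Filter.Eventually.of_forall fun y hy S hS => hB (S, y) ⟨hS, Set.uIoc_subset_uIcc hy⟩)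
    intervalIntegrable_const
    (Filter.Eventually.of_forall fun y _ S hS => hderiv S hS y)).2

lemma hasDerivAt_normalizedIntegral (hφ : ContDiff ℝ 1 φ) (a x : ℝ) (hT : 0 < T) :
    HasDerivAt (fun S => normalizedIntegral a φ S x)
      (T⁻¹ * ((a - 1) * normalizedIntegral a φ T x -
        normalizedIntegral a (fun s => s * deriv φ s) T x)) T := by
  refine ((Real.hasDerivAt_rpow_const (Or.inl hT.ne')).mul
    (hasDerivAt_bracketIntegral_scale hφ a x hT)).congr_deriv ?_
  rw [normalizedIntegral, normalizedIntegral, Real.rpow_sub_one hT.ne']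
  ring

lemma exists_abs_mul_deriv_normalizedIntegral_le (ha0 : 0 ≤ a) (ha1 : a < 1)
    (hφ : ContDiff ℝ 1 φ) (hφc : HasCompactSupport φ) :
    ∃ C, ∀ T x, 0 < T → |T * deriv (fun S => normalizedIntegral a φ S x) T| ≤ C := by
  obtain ⟨C₀, hC₀⟩ := exists_abs_normalizedIntegral_le ha0 ha1 hφ.continuous hφc
  obtain ⟨C₁, hC₁⟩ := exists_abs_normalizedIntegral_le (φ := fun s => s * deriv φ s) ha0 ha1
    (continuous_id.mul (hφ.continuous_deriv le_rfl)) hφc.deriv.mul_left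
  refine ⟨|a - 1| * C₀ + C₁, fun T x hT => ?_⟩
  rw [(hasDerivAt_normalizedIntegral hφ a x hT).deriv, mul_inv_cancel_left₀ hT.ne']
  calc _ ≤ |(a - 1) * normalizedIntegral a φ T x| +
        |normalizedIntegral a (fun s => s * deriv φ s) T x| := abs_sub _ _
    _ ≤ |a - 1| * C₀ + C₁ := by
        rw [abs_mul]
        gcongr
        · exact hC₀ T x hT
        · exact hC₁ T x hT

end BracketIntegral

/-- The symbol `λ_{p-k}(x, ξ)`, for real `p` and `k`, built from the cutoffs `ω` in frequency and
`ψ` in phase space. -/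
def lambdaSymbol (p k : ℝ) (ω ψ : ℝ → ℝ) (M h x ξ : ℝ) : ℝ :=
  M * ω (ξ / h) * jbh h ξ ^ (-k + 1) *
    bracketIntegral ((p - k) / (p - 1)) ψ (jbh h ξ ^ (p - 1)) x

section LambdaSymbol

variable {p k h : ℝ} {ω ψ : ℝ → ℝ}

lemma sub_div_sub_one_mem_Ico (hk : 1 < k) (hkp : k ≤ p) : (p - k) / (p - 1) ∈ Set.Ico 0 1 :=
  ⟨div_nonneg (by linarith) (by linarith), (div_lt_one (by linarith)).2 (by linarith)⟩

lemma lambdaSymbol_eq_mul_normalizedIntegral (hp : p ≠ 1) (hh : 0 < h) (k M x ξ : ℝ)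
    (ω ψ : ℝ → ℝ) :
    lambdaSymbol p k ω ψ M h x ξ =
      M * (ω (ξ / h) * normalizedIntegral ((p - k) / (p - 1)) ψ (jbh h ξ ^ (p - 1)) x) := by
  have hp0 : p - 1 ≠ 0 := sub_ne_zero.2 hp
  have hexp : (p - 1) * ((p - k) / (p - 1) - 1) = -k + 1 := by
    field_simp
    ring
  rw [lambdaSymbol, normalizedIntegral, ← Real.rpow_mul (jbh_pos hh ξ).le, hexp]
  ring

lemma exists_abs_deriv_lambdaSymbol_frequency_le (hk : 1 < k) (hkp : k ≤ p) {Ω A : ℝ}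
    (hω : Differentiable ℝ ω) (hωb : ∀ t, |ω t| ≤ Ω) (hωA : ∀ t, |deriv ω t| * jb t ≤ A)
    (hψ : ContDiff ℝ 1 ψ) (hψc : HasCompactSupport ψ) :
    ∃ D, ∀ M h x ξ, 0 < h →
      |deriv (lambdaSymbol p k ω ψ M h x) ξ| ≤ D * |M| * (jbh h ξ)⁻¹ := by
  obtain ⟨ha0, ha1⟩ := sub_div_sub_one_mem_Ico hk hkp
  obtain ⟨C₀, hC₀⟩ := exists_abs_normalizedIntegral_le ha0 ha1 hψ.continuous hψc
  obtain ⟨C₁, hC₁⟩ := exists_abs_mul_deriv_normalizedIntegral_le ha0 ha1 hψ hψc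
  refine ⟨A * C₀ + Ω * (|p - 1| * C₁), fun M h x ξ hh => ?_⟩
  have hT : 0 < jbh h ξ ^ (p - 1) := Real.rpow_pos_of_pos (jbh_pos hh ξ) _
  set N : ℝ → ℝ := fun T => normalizedIntegral ((p - k) / (p - 1)) ψ T x
  have hN : ∀ T, 0 < T → DifferentiableAt ℝ N T := fun T hT =>
    (hasDerivAt_normalizedIntegral hψ _ x hT).differentiableAt
  have hsymbol : lambdaSymbol p k ω ψ M h x =
      fun ζ => M * (ω (ζ / h) * N (jbh h ζ ^ (p - 1))) := funext fun ζ =>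
    lambdaSymbol_eq_mul_normalizedIntegral (by linarith) hh k M x ζ ω ψ
  have hω_diff : DifferentiableAt ℝ (fun ζ => ω (ζ / h)) ξ := by fun_prop
  have hN_diff : DifferentiableAt ℝ (fun ζ => N (jbh h ζ ^ (p - 1))) ξ :=
    (hN _ hT).fun_comp' ξ (hasDerivAt_jbh_rpow hh (p - 1) ξ).differentiableAt
  have hω' := abs_deriv_comp_div_le hωA hh ξ
  have hN' := abs_deriv_comp_jbh_rpow_le hN (fun T => hC₁ T x) hh (p - 1) ξ
  rw [hsymbol, deriv_const_mul_field, deriv_fun_mul hω_diff hN_diff, abs_mul]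
  calc _ ≤ |M| * (A * (jbh h ξ)⁻¹ * C₀ + Ω * (|p - 1| * C₁ * (jbh h ξ)⁻¹)) := by
        gcongr
        refine (abs_add_le _ _).trans ?_
        rw [abs_mul, abs_mul]
        gcongr
        · exact (abs_nonneg _).trans hω'
        · exact hC₀ _ x hT
        · exact (abs_nonneg _).trans (hωb 0)
        · exact hωb _
    _ = (A * C₀ + Ω * (|p - 1| * C₁)) * |M| * (jbh h ξ)⁻¹ := by ring

lemma abs_deriv_lambdaSymbol_space_le {Ω K : ℝ} (hωb : ∀ t, |ω t| ≤ Ω) (hψ : Continuous ψ)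
    (hψb : ∀ s, |ψ s| ≤ K) (hh : 0 < h) (p k M x ξ : ℝ) :
    |deriv (fun z => lambdaSymbol p k ω ψ M h z ξ) x| ≤
      Ω * K * |M| * (jbh h ξ ^ (-k + 1) * jb x ^ (-((p - k) / (p - 1)))) := by
  have hΩ : 0 ≤ Ω := (abs_nonneg _).trans (hωb 0)
  have hP : 0 < jbh h ξ ^ (-k + 1) := Real.rpow_pos_of_pos (jbh_pos hh ξ) _
  have hj : 0 < jb x ^ (-((p - k) / (p - 1))) := Real.rpow_pos_of_pos (jb_pos x) _
  simp only [lambdaSymbol]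
  rw [((hasDerivAt_bracketIntegral_endpoint hψ _ _ x).const_mul _).deriv]
  simp only [abs_mul, abs_of_pos hP, abs_of_pos hj]
  calc _ ≤ |M| * Ω * jbh h ξ ^ (-k + 1) * (jb x ^ (-((p - k) / (p - 1))) * K) := by
        gcongr
        · exact hωb _
        · exact hψb _
    _ = _ := by ring

end LambdaSymbol

theorem stmt10_general {p k : ℝ} (hk : 1 < k) (hkp : k ≤ p) {ω ψ : ℝ → ℝ} {Ω A : ℝ}
    (hω : Differentiable ℝ ω) (hωb : ∀ t, |ω t| ≤ Ω) (hωA : ∀ t, |deriv ω t| * jb t ≤ A)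
    (hψ : ContDiff ℝ 1 ψ) (hψc : HasCompactSupport ψ) :
    ∃ C > 0, ∀ M h : ℝ, 1 ≤ h → ∀ x ξ : ℝ,
      |deriv (fun ζ => lambdaSymbol p k ω ψ M h x ζ) ξ *
          deriv (fun z => lambdaSymbol p k ω ψ M h z ξ) x| ≤
        C * M ^ 2 * jb x ^ (-((p - k) / (p - 1))) * jbh h ξ ^ (-k) ∧
      C * M ^ 2 * jb x ^ (-((p - k) / (p - 1))) * jbh h ξ ^ (-k) ≤ C * M ^ 2 * h⁻¹ := by
  obtain ⟨D, hD⟩ := exists_abs_deriv_lambdaSymbol_frequency_le hk hkp hω hωb hωA hψ hψc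
  obtain ⟨K, hK⟩ := hψc.exists_bound_of_continuous hψ.continuous
  have hC : 0 < max 1 (D * (Ω * K)) := by positivity
  refine ⟨max 1 (D * (Ω * K)), hC, fun M h hh x ξ => ⟨?_, ?_⟩⟩
  · have hh0 : 0 < h := by linarith
    have hW := jbh_pos hh0 ξ
    have hξ := hD M h x ξ hh0
    have hx := abs_deriv_lambdaSymbol_space_le hωb hψ.continuous hK hh0 p k M x ξ
    set w := jb x ^ (-((p - k) / (p - 1)))
    have hw : 0 < w := Real.rpow_pos_of_pos (jb_pos x) _
    calc _ ≤ D * |M| * (jbh h ξ)⁻¹ * (Ω * K * |M| * (jbh h ξ ^ (-k + 1) * w)) := by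
          rw [abs_mul]
          exact mul_le_mul hξ hx (abs_nonneg _) ((abs_nonneg _).trans hξ)
      _ = D * (Ω * K) * M ^ 2 * w * jbh h ξ ^ (-k) := by
          rw [Real.rpow_add_one hW.ne', ← sq_abs M]
          field_simp
      _ ≤ max 1 (D * (Ω * K)) * M ^ 2 * w * jbh h ξ ^ (-k) := by
          gcongr
          exact le_max_right _ _
  · rw [mul_assoc _ (jb x ^ _)]
    gcongr
    exact jb_rpow_mul_jbh_rpow_le_inv (sub_div_sub_one_mem_Ico hk hkp).1 hk.le hh x ξ

/-- for
`λ_{p-k}(x,ξ) = M·ω(ξ/h)·⟨ξ⟩ₕ^{-k+1}·∫₀ˣ ⟨y⟩^{-(p-k)/(p-1)} ψ(⟨y⟩/⟨ξ⟩ₕ^{p-1}) dy`,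
one has `|∂_ξλ_{p-k}·∂_xλ_{p-k}| ≤ C·M²·⟨x⟩^{-(p-k)/(p-1)}·⟨ξ⟩ₕ^{-k} ≤ C·M²·h⁻¹`,
with `C` independent of `h, M, x, ξ`. -/
theorem stmt10 (p k : ℕ) (hp : 2 ≤ p) (hk2 : 2 ≤ k) (hkp : k ≤ p - 1)
    (R : ℝ) (hR : 1 < R)
    (ω : ℝ → ℝ) (hω : ContDiff ℝ (⊤ : ℕ∞) ω) (hωb : ∀ ξ : ℝ, |ω ξ| ≤ 1)
    (hω0 : ∀ ξ : ℝ, |ξ| ≤ 1 → ω ξ = 0)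
    (hωcp : ∀ ξ₁ ξ₂ : ℝ, R ≤ ξ₁ → R ≤ ξ₂ → ω ξ₁ = ω ξ₂)
    (hωcm : ∀ ξ₁ ξ₂ : ℝ, ξ₁ ≤ -R → ξ₂ ≤ -R → ω ξ₁ = ω ξ₂)
    (ψ : ℝ → ℝ) (hψ : ContDiff ℝ (⊤ : ℕ∞) ψ) (hψc : HasCompactSupport ψ)
    (hψ01 : ∀ y : ℝ, 0 ≤ ψ y ∧ ψ y ≤ 1)
    (hψ1 : ∀ y : ℝ, |y| ≤ 1 / 2 → ψ y = 1)
    (hψ0 : ∀ y : ℝ, 1 ≤ |y| → ψ y = 0) :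
    ∃ C > 0, ∀ M h : ℝ, 0 < M → 1 ≤ h → ∀ x ξ : ℝ,
      |deriv (fun ζ => M * ω (ζ / h) * jbh h ζ ^ (-(k : ℝ) + 1) *
            ∫ y in (0:ℝ)..x,
              jb y ^ (-(((p : ℝ) - k) / ((p : ℝ) - 1))) *
                ψ (jb y / jbh h ζ ^ ((p : ℝ) - 1))) ξ *
          deriv (fun z => M * ω (ξ / h) * jbh h ξ ^ (-(k : ℝ) + 1) *
            ∫ y in (0:ℝ)..z,
              jb y ^ (-(((p : ℝ) - k) / ((p : ℝ) - 1))) *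
                ψ (jb y / jbh h ξ ^ ((p : ℝ) - 1))) x| ≤
        C * M ^ 2 * jb x ^ (-(((p : ℝ) - k) / ((p : ℝ) - 1))) * jbh h ξ ^ (-(k : ℝ)) ∧
      C * M ^ 2 * jb x ^ (-(((p : ℝ) - k) / ((p : ℝ) - 1))) * jbh h ξ ^ (-(k : ℝ)) ≤
        C * M ^ 2 * h⁻¹ := by
  have hω1 : ContDiff ℝ 1 ω := hω.of_le (by exact_mod_cast le_top)
  obtain ⟨A, hA⟩ := exists_abs_deriv_mul_jb_le hω1 hωcp hωcm
  obtain ⟨C, hC, hbound⟩ := stmt10_general (p := p) (k := k) (by exact_mod_cast hk2)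
    (by exact_mod_cast hkp.trans (Nat.sub_le p 1)) (hω1.differentiable one_ne_zero) hωb hA
    (hψ.of_le (by exact_mod_cast le_top)) hψc
  exact ⟨C, hC, fun M h _ => hbound M h⟩
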